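/- Suppose the target density satisfies π ≤ M for some constant M ∈ (0, +∞), the proposal density q does not depend on the current state, and inf_{θ ∈ Θ} { q(θ)/π(θ) } = 0. Then the Metropolis–Hastings independence kernel P is not Wasserstein geometrically ergodic with respect to the metric induced by any norm ‖·‖ on ℝ^d. -/

import Mathlib

/-!
The idea is rejection stickiness. From a state `θ` with `π θ > 0` the acceptance probability is
at most `q θ / π θ` (`mhiAcceptProb_le`), so `P ^ t (θ, {θ}) ≥ w ^ t` as soon as
`q θ / π θ ≤ 1 - w` (`pow_le_kernelIter_singleton`); and since `inf q / π = 0`, such a `θ` exists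
for every `w < 1`. The target has a bounded density, so it gives a small norm ball of radius `r`
mass at most of order `r` (`target_ball_le`). With `r` a small multiple of `w ^ t` that mass is at
most `w ^ t / 2`, so any coupling carries mass at least `w ^ t / 2` from `θ` over a distance of at
least `r`. This costs at least a constant times `w ^ (2 * t)` (`le_wassersteinDist_of_atom`), and
choosing `w ^ 2 > ε` rules out the rate `ε`.
-/

open MeasureTheory ENNReal Filter Matrix
open scoped BigOperators NNReal

noncomputable section

/-- The set of couplings of two measures. -/
def couplings {E : Type*} [MeasurableSpace E] (μ ν : Measure E) : Set (Measure (E × E)) :=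
  {ξ | ξ.map Prod.fst = μ ∧ ξ.map Prod.snd = ν}

/-- The `L₁` Wasserstein (transportation) distance with cost `ρ`, valued in `ℝ≥0∞`:
`W_ρ(μ, ν) = inf over couplings ξ of ∫ ρ dξ`. -/
def wassersteinDist {E : Type*} [MeasurableSpace E] (ρ : E → E → ℝ)
    (μ ν : Measure E) : ℝ≥0∞ :=
  ⨅ ξ ∈ couplings μ ν, ∫⁻ p, ENNReal.ofReal (ρ p.1 p.2) ∂ξ

/-- `ρ` is a lower semicontinuous metric on the set `Θ`. -/
def IsLSCMetricOn {E : Type*} [TopologicalSpace E] (Θ : Set E) (ρ : E → E → ℝ) : Prop :=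
  LowerSemicontinuousOn (fun p : E × E => ρ p.1 p.2) (Θ ×ˢ Θ) ∧
  (∀ x ∈ Θ, ∀ y ∈ Θ, 0 ≤ ρ x y) ∧ (∀ x ∈ Θ, ρ x x = 0) ∧
  (∀ x ∈ Θ, ∀ y ∈ Θ, ρ x y = 0 → x = y) ∧
  (∀ x ∈ Θ, ∀ y ∈ Θ, ρ x y = ρ y x) ∧
  (∀ x ∈ Θ, ∀ y ∈ Θ, ∀ z ∈ Θ, ρ x z ≤ ρ x y + ρ y z)

/-- Metropolis–Hastings acceptance ratio for target density `π` and proposal density `q`. -/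
def mhAccept {E : Type*} (π : E → ℝ) (q : E → E → ℝ) (θ θ' : E) : ℝ :=
  if 0 < π θ * q θ θ' then min (π θ' * q θ' θ / (π θ * q θ θ')) 1 else 1

/-- Metropolis–Hastings overall acceptance probability `A(θ)`. -/
def mhAcceptProb {E : Type*} [MeasureSpace E] (Θ : Set E) (π : E → ℝ) (q : E → E → ℝ)
    (θ : E) : ℝ :=
  ∫ θ' in Θ, mhAccept π q θ θ' * q θ θ'

/-- The Metropolis–Hastings Markov kernel
`P(θ, B) = ∫_B a(θ,θ') q(θ,θ') dθ' + δ_θ(B) (1 - A(θ))`. -/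
def mhKernel {E : Type*} [MeasureSpace E] (Θ : Set E) (π : E → ℝ) (q : E → E → ℝ)
    (θ : E) : Measure E :=
  (volume.restrict Θ).withDensity (fun θ' => ENNReal.ofReal (mhAccept π q θ θ' * q θ θ')) +
    (ENNReal.ofReal (1 - mhAcceptProb Θ π q θ)) • Measure.dirac θ

/-- `t`-fold iterate `P^t` of a Markov kernel, with `P^0(θ, ·) = δ_θ`. -/
def kernelIter {E : Type*} [MeasurableSpace E] (P : E → Measure E) : ℕ → E → Measure E
  | 0, θ => Measure.dirac θ
  | (t + 1), θ => (P θ).bind (kernelIter P t)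


/-- Acceptance ratio for the Metropolis–Hastings independence (MHI) algorithm, whose
proposal density `q` does not depend on the current state. -/
def mhiAccept {E : Type*} (π : E → ℝ) (q : E → ℝ) (θ θ' : E) : ℝ :=
  if 0 < π θ * q θ' then min (π θ' * q θ / (π θ * q θ')) 1 else 1

/-- Overall acceptance probability `A(θ)` for the MHI algorithm. -/
def mhiAcceptProb {E : Type*} [MeasureSpace E] (Θ : Set E) (π : E → ℝ) (q : E → ℝ)
    (θ : E) : ℝ :=
  ∫ θ' in Θ, mhiAccept π q θ θ' * q θ'

/-- The MHI Markov kernel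
`P(θ, B) = ∫_B a(θ,θ') q(θ') dθ' + δ_θ(B) (1 - A(θ))`. -/
def mhiKernel {E : Type*} [MeasureSpace E] (Θ : Set E) (π : E → ℝ) (q : E → ℝ)
    (θ : E) : Measure E :=
  (volume.restrict Θ).withDensity (fun θ' => ENNReal.ofReal (mhiAccept π q θ θ' * q θ')) +
    (ENNReal.ofReal (1 - mhiAcceptProb Θ π q θ)) • Measure.dirac θ

end

/-! ### The independence kernel and transport from an atom -/

section Kernel

variable {E : Type*} [MeasureSpace E] {Θ : Set E} {π q : E → ℝ}

lemma measurable_mhiAccept_mul (hπ : Measurable π) (hq : Measurable q) :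
    Measurable (fun p : E × E => mhiAccept π q p.1 p.2 * q p.2) := by
  unfold mhiAccept
  refine Measurable.mul (Measurable.ite ?_ ?_ measurable_const) (hq.comp measurable_snd)
  · exact measurableSet_lt measurable_const
      ((hπ.comp measurable_fst).mul (hq.comp measurable_snd))
  · exact Measurable.min (((hπ.comp measurable_snd).mul (hq.comp measurable_fst)).div
      ((hπ.comp measurable_fst).mul (hq.comp measurable_snd))) measurable_const

lemma measurable_mhiKernel [SFinite (volume : Measure E)] (hπ : Measurable π)
    (hq : Measurable q) : Measurable (mhiKernel Θ π q) := by
  have hm := measurable_mhiAccept_mul hπ hq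
  have hA : Measurable (mhiAcceptProb Θ π q) := by
    have := (hm.stronglyMeasurable.integral_prod_right' (ν := volume.restrict Θ)).measurable
    exact this
  refine Measure.measurable_of_measurable_coe _ fun s hs => ?_
  simp only [mhiKernel, Measure.add_apply, Measure.smul_apply, smul_eq_mul,
    withDensity_apply _ hs]
  refine Measurable.add ?_ (Measurable.mul ?_ ?_)
  · exact hm.ennreal_ofReal.lintegral_prod_right'
  · exact (measurable_const.sub hA).ennreal_ofReal
  · exact (Measure.measurable_coe hs).comp Measure.measurable_dirac

lemma measurable_kernelIter {P : E → Measure E} (hP : Measurable P) (t : ℕ) :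
    Measurable (kernelIter P t) := by
  induction t with
  | zero => exact Measure.measurable_dirac
  | succ t ih => exact (Measure.measurable_bind' ih).comp hP

/-- The mass that stays at `θ` by `t` successive rejections. -/
lemma pow_le_kernelIter_singleton [SFinite (volume : Measure E)] [MeasurableSingletonClass E]
    (hπ : Measurable π) (hq : Measurable q) {θ : E} {w : ℝ} (hw : 0 ≤ w)
    (hA : mhiAcceptProb Θ π q θ ≤ 1 - w) (t : ℕ) :
    ENNReal.ofReal (w ^ t) ≤ kernelIter (mhiKernel Θ π q) t θ {θ} := by
  have hP : Measurable (mhiKernel Θ π q) := measurable_mhiKernel hπ hq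
  induction t with
  | zero => simp [kernelIter]
  | succ t ih =>
    have hk := measurable_kernelIter hP t
    rw [kernelIter, Measure.bind_apply (measurableSet_singleton θ) hk.aemeasurable, mhiKernel,
      lintegral_add_measure, lintegral_smul_measure, lintegral_dirac, smul_eq_mul, pow_succ',
      ENNReal.ofReal_mul hw]
    refine le_trans ?_ le_add_self
    gcongr
    linarith

/-- From `θ`, the accepted proposal density is dominated by `π · (q θ / π θ)`, which integrates to
`q θ / π θ`. -/
lemma mhiAcceptProb_le (hπ0 : ∀ θ, 0 ≤ π θ) (hq0 : ∀ θ, 0 ≤ q θ) (hπ : Measurable π)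
    (h1 : ∫⁻ x in Θ, ENNReal.ofReal (π x) = 1) {θ : E} (hθ : 0 < π θ) :
    mhiAcceptProb Θ π q θ ≤ q θ / π θ := by
  have hint : Integrable π (volume.restrict Θ) := by
    refine ⟨hπ.aestronglyMeasurable, ?_⟩
    rw [hasFiniteIntegral_iff_ofReal (Eventually.of_forall hπ0), h1]
    exact ENNReal.one_lt_top
  have hone : ∫ x in Θ, π x = 1 := by
    rw [integral_eq_lintegral_of_nonneg_ae (Eventually.of_forall hπ0) hπ.aestronglyMeasurable,
      h1, ENNReal.toReal_one]
  have : mhiAcceptProb Θ π q θ ≤ ∫ x in Θ, π x * (q θ / π θ) := by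
    refine integral_mono_of_nonneg (Eventually.of_forall fun x => ?_) (hint.mul_const _)
      (Eventually.of_forall fun x => ?_)
    · have h := hπ0 x
      have h' := hq0 x
      have h'' := hq0 θ
      have : 0 ≤ mhiAccept π q θ x := by
        unfold mhiAccept
        split_ifs <;> positivity
      exact mul_nonneg this h'
    · change mhiAccept π q θ x * q x ≤ π x * (q θ / π θ)
      unfold mhiAccept
      split_ifs with h
      · have hqx : 0 < q x := (pos_iff_pos_of_mul_pos h).1 hθ
        calc _ ≤ π x * q θ / (π θ * q x) * q x := by gcongr; exact min_le_left _ _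
          _ = _ := by field_simp
      · have hqx : q x = 0 := by
          by_contra hne
          exact h (mul_pos hθ (lt_of_le_of_ne (hq0 x) (Ne.symm hne)))
        rw [hqx, mul_zero]
        exact mul_nonneg (hπ0 x) (div_nonneg (hq0 θ) hθ.le)
  rwa [integral_mul_const, hone, one_mul] at this

/-- If `μ` has an atom of mass at least `s` at `θ`, and `ν` gives mass at most `s / 2` to the
points at cost less than `r` from `θ`, then transporting `μ` to `ν` costs at least `r * (s / 2)`. -/
lemma le_wassersteinDist_of_atom {E : Type*} [MeasurableSpace E] [MeasurableSingletonClass E]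
    {ρ : E → E → ℝ} {μ ν : Measure E} {θ : E} {r s : ℝ}
    (hρ : Measurable (ρ θ)) (hr : 0 ≤ r) (hs : 0 ≤ s)
    (hμ : ENNReal.ofReal s ≤ μ {θ}) (hν : ν {y | ρ θ y < r} ≤ ENNReal.ofReal (s / 2)) :
    ENNReal.ofReal (r * (s / 2)) ≤ wassersteinDist ρ μ ν := by
  refine le_iInf₂ fun ξ hξ => ?_
  obtain ⟨h1, h2⟩ := hξ
  have hB : MeasurableSet {y | ρ θ y < r} := measurableSet_lt hρ measurable_const
  rw [← h1, Measure.map_apply measurable_fst (measurableSet_singleton θ)] at hμ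
  rw [← h2, Measure.map_apply measurable_snd hB] at hν
  set S : Set (E × E) := Prod.fst ⁻¹' {θ} \ Prod.snd ⁻¹' {y | ρ θ y < r} with hS
  have hSm : MeasurableSet S :=
    (measurable_fst (measurableSet_singleton θ)).diff (measurable_snd hB)
  have hmass : ENNReal.ofReal (s / 2) ≤ ξ S := by
    calc ENNReal.ofReal (s / 2) = ENNReal.ofReal s - ENNReal.ofReal (s / 2) := by
          rw [← ENNReal.ofReal_sub _ (by positivity)]; congr 1; ring
      _ ≤ ξ (Prod.fst ⁻¹' {θ}) - ξ (Prod.snd ⁻¹' {y | ρ θ y < r}) := tsub_le_tsub hμ hν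
      _ ≤ ξ S := le_measure_sdiff
  calc ENNReal.ofReal (r * (s / 2)) = ENNReal.ofReal r * ENNReal.ofReal (s / 2) :=
        ENNReal.ofReal_mul hr
    _ ≤ ENNReal.ofReal r * ξ S := by gcongr
    _ = ∫⁻ _ in S, ENNReal.ofReal r ∂ξ := (setLIntegral_const _ _).symm
    _ ≤ ∫⁻ p in S, ENNReal.ofReal (ρ p.1 p.2) ∂ξ := by
        refine setLIntegral_mono' hSm fun p hp => ENNReal.ofReal_le_ofReal ?_
        obtain ⟨hp1, hp2⟩ := hp
        have hp1 : p.1 = θ := hp1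
        rw [hp1]
        exact not_lt.1 hp2
    _ ≤ ∫⁻ p, ENNReal.ofReal (ρ p.1 p.2) ∂ξ := setLIntegral_le_lintegral _ _

end Kernel

/-! ### Norms on `ℝ^d` and small balls -/

section Norm

variable {d : ℕ} {N : (Fin d → ℝ) → ℝ}

lemma continuous_of_norm_axioms (hNadd : ∀ x y, N (x + y) ≤ N x + N y)
    (hNsmul : ∀ (c : ℝ) x, N (c • x) = |c| * N x) : Continuous N := by
  have hconv : ConvexOn ℝ Set.univ N := by
    refine ⟨convex_univ, fun x _ y _ a b ha hb _ => ?_⟩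
    calc N (a • x + b • y) ≤ N (a • x) + N (b • y) := hNadd _ _
      _ = a • N x + b • N y := by
        rw [hNsmul, hNsmul, abs_of_nonneg ha, abs_of_nonneg hb, smul_eq_mul, smul_eq_mul]
  exact continuousOn_univ.1 (hconv.continuousOn isOpen_univ)

/-- Every norm on `ℝ^d` dominates a multiple of the sup norm, by compactness of the sup-norm unit
sphere. -/
lemma exists_pos_mul_norm_le (hNadd : ∀ x y, N (x + y) ≤ N x + N y)
    (hNsmul : ∀ (c : ℝ) x, N (c • x) = |c| * N x) (hNzero : ∀ x, N x = 0 ↔ x = 0) :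
    ∃ c : ℝ, 0 < c ∧ ∀ x, c * ‖x‖ ≤ N x := by
  have hNnn : ∀ x, 0 ≤ N x := fun x => by
    have h := hNadd x ((-1 : ℝ) • x)
    rw [hNsmul, neg_one_smul, add_neg_cancel, (hNzero 0).2 rfl] at h
    norm_num at h
    linarith
  have key : ∃ c : ℝ, 0 < c ∧ ∀ x, ‖x‖ = 1 → c ≤ N x := by
    rcases (Metric.sphere (0 : Fin d → ℝ) 1).eq_empty_or_nonempty with he | hne
    · refine ⟨1, one_pos, fun x hx => ?_⟩
      have : x ∈ Metric.sphere (0 : Fin d → ℝ) 1 := by simpa using hx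
      simp [he] at this
    · obtain ⟨z, hz, hmin⟩ := (isCompact_sphere (0 : Fin d → ℝ) 1).exists_isMinOn hne
        (continuous_of_norm_axioms hNadd hNsmul).continuousOn
      refine ⟨N z, lt_of_le_of_ne (hNnn z) fun h => ?_, fun x hx => hmin (by simpa using hx)⟩
      rw [(hNzero z).1 h.symm] at hz
      simp at hz
  obtain ⟨c, hc, h⟩ := key
  refine ⟨c, hc, fun x => ?_⟩
  by_cases hx : x = 0
  · simpa [hx] using hNnn 0
  · have hx' : 0 < ‖x‖ := norm_pos_iff.2 hx
    have h1 := h (‖x‖⁻¹ • x) (by rw [norm_smul, norm_inv, norm_norm, inv_mul_cancel₀ hx'.ne'])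
    rw [hNsmul, abs_of_pos (inv_pos.2 hx')] at h1
    rw [inv_mul_eq_div, le_div_iff₀ hx'] at h1
    exact h1

/-- A density bounded by `M` gives a ball of small radius `r` a mass `O(r)`. The exact order is
`r ^ d`; the bound `r ≤ c / 2` makes the enclosing cube have side at most `1`, so that the
linear bound holds. -/
lemma target_ball_le (hd : 0 < d) {Θ : Set (Fin d → ℝ)} {π : (Fin d → ℝ) → ℝ} {M c r : ℝ}
    (hM : 0 < M) (hπM : ∀ θ, π θ ≤ M) (hc : 0 < c) (hN : ∀ x, c * ‖x‖ ≤ N x)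
    (hr : 0 < r) (hrc : r ≤ c / 2) (θ : Fin d → ℝ)
    (hB : MeasurableSet {y | N (θ - y) < r}) :
    ((volume.restrict Θ).withDensity fun x => ENNReal.ofReal (π x)) {y | N (θ - y) < r}
      ≤ ENNReal.ofReal (M * (2 * r / c)) := by
  have hsub : {y | N (θ - y) < r} ⊆ Metric.ball θ (r / c) := fun y hy => by
    rw [Metric.mem_ball, dist_comm, dist_eq_norm, lt_div_iff₀ hc, mul_comm]
    exact (hN _).trans_lt hy
  have hle : 2 * (r / c) ≤ 1 := by
    rw [← mul_div_assoc, div_le_one hc]; linarith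
  rw [withDensity_apply _ hB]
  calc ∫⁻ x in {y | N (θ - y) < r}, ENNReal.ofReal (π x) ∂volume.restrict Θ
      ≤ ∫⁻ _ in {y | N (θ - y) < r}, ENNReal.ofReal M ∂volume.restrict Θ :=
        lintegral_mono fun x => ENNReal.ofReal_le_ofReal (hπM x)
    _ = ENNReal.ofReal M * (volume.restrict Θ) {y | N (θ - y) < r} := setLIntegral_const _ _
    _ ≤ ENNReal.ofReal M * volume (Metric.ball θ (r / c)) := by
        gcongr
        · exact Measure.restrict_le_self
    _ = ENNReal.ofReal M * ENNReal.ofReal ((2 * (r / c)) ^ d) := by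
        rw [Real.volume_pi_ball _ (by positivity), Fintype.card_fin]
    _ ≤ ENNReal.ofReal M * ENNReal.ofReal (2 * r / c) := by
        gcongr
        rw [mul_div_assoc]
        exact pow_le_of_le_one (by positivity) hle hd.ne'
    _ = _ := (ENNReal.ofReal_mul hM.le).symm

end Norm

/-! ### Failure of geometric ergodicity -/

/-- Proposition, necessary condition for the MHI algorithm.
If the target density satisfies `π ≤ M` and `inf_{θ ∈ Θ} q(θ)/π(θ) = 0`, then the MHI
kernel is not Wasserstein geometrically ergodic with respect to the metric induced by any
norm on `ℝ^d`. -/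
theorem mhi_not_wasserstein_geometrically_ergodic
    {d : ℕ} (hd : 0 < d)
    (Θ : Set (Fin d → ℝ)) (hΘne : Θ.Nonempty) (hΘcl : IsClosed Θ)
    (π : (Fin d → ℝ) → ℝ) (q : (Fin d → ℝ) → ℝ)
    (hπmeas : Measurable π) (hπ0 : ∀ θ, 0 ≤ π θ)
    (hqmeas : Measurable q) (hq0 : ∀ θ', 0 ≤ q θ')
    (hqpos : ∀ θ' ∈ Θ, 0 < π θ' → 0 < q θ')
    -- the support of `π` on `Θ` is nonempty
    (hsupp : ∃ θ ∈ Θ, 0 < π θ)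
    -- `Π` is a probability measure on `Θ` with Lebesgue density `π`
    (Pi : Measure (Fin d → ℝ)) [IsProbabilityMeasure Pi]
    (hPi : Pi = (volume.restrict Θ).withDensity fun θ => ENNReal.ofReal (π θ))
    -- the proposal `Q` is a probability measure on `Θ` with density `q`, different from `Π`
    (hQprob : IsProbabilityMeasure
      ((volume.restrict Θ).withDensity fun θ' => ENNReal.ofReal (q θ')))
    (hQnePi : ((volume.restrict Θ).withDensity fun θ' => ENNReal.ofReal (q θ')) ≠ Pi)
    -- the target density is bounded: `π ≤ M`
    (M : ℝ) (hM : 0 < M) (hπM : ∀ θ, π θ ≤ M)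
    -- `inf_{θ ∈ Θ} q(θ)/π(θ) = 0`
    (hinf : (⨅ θ : {θ : Fin d → ℝ // θ ∈ Θ ∧ 0 < π θ}, q (θ : Fin d → ℝ) / π (θ : Fin d → ℝ)) = 0)
    -- `N` is an arbitrary norm on `ℝ^d`
    (N : (Fin d → ℝ) → ℝ)
    (hNadd : ∀ x y, N (x + y) ≤ N x + N y)
    (hNsmul : ∀ (c : ℝ) x, N (c • x) = |c| * N x)
    (hNzero : ∀ x, N x = 0 ↔ x = 0) :
    -- `P` is not Wasserstein geometrically ergodic for the metric induced by `N`
    ¬ ∃ ε : ℝ, ε ∈ Set.Ioo (0 : ℝ) 1 ∧ ∀ θ ∈ Θ, ∃ Mθ : ℝ, 0 < Mθ ∧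
        ∀ t : ℕ, 1 ≤ t →
          wassersteinDist (fun x y => N (x - y)) (kernelIter (mhiKernel Θ π q) t θ) Pi ≤
            ENNReal.ofReal (Mθ * ε ^ t) := by
  rintro ⟨ε, ⟨hε0, hε1⟩, herg⟩
  -- a holding probability `w` with `ε < w ^ 2`
  obtain ⟨w, hw0, hw1, hwε⟩ : ∃ w : ℝ, 0 < w ∧ w < 1 ∧ ε < w ^ 2 := by
    refine ⟨√((ε + 1) / 2), by positivity, ?_, ?_⟩
    · rw [Real.sqrt_lt' one_pos]; linarith
    · rw [Real.sq_sqrt (by positivity)]; linarith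
  obtain ⟨θ, hθΘ, hθπ, hθ⟩ : ∃ θ ∈ Θ, 0 < π θ ∧ q θ / π θ < 1 - w := by
    obtain ⟨θ₀, h₀, h₀'⟩ := hsupp
    have : Nonempty {θ : Fin d → ℝ // θ ∈ Θ ∧ 0 < π θ} := ⟨⟨θ₀, h₀, h₀'⟩⟩
    obtain ⟨⟨θ, h1, h2⟩, h3⟩ := exists_lt_of_ciInf_lt (hinf.trans_lt (sub_pos.2 hw1))
    exact ⟨θ, h1, h2, h3⟩
  have hone : ∫⁻ x in Θ, ENNReal.ofReal (π x) = 1 := by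
    have := measure_univ (μ := Pi)
    rwa [hPi, withDensity_apply _ MeasurableSet.univ, Measure.restrict_univ] at this
  have hA : mhiAcceptProb Θ π q θ ≤ 1 - w :=
    (mhiAcceptProb_le hπ0 hq0 hπmeas hone hθπ).trans hθ.le
  have hNcont := continuous_of_norm_axioms hNadd hNsmul
  have hNm : Measurable fun y => N (θ - y) :=
    (hNcont.comp (continuous_const.sub continuous_id)).measurable
  obtain ⟨c, hc, hcN⟩ := exists_pos_mul_norm_le hNadd hNsmul hNzero
  -- `κ` is small enough that the ball of radius `κ * w ^ t` has target mass at most `w ^ t / 2`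
  obtain ⟨κ, hκ0, hκ1, hκ2⟩ : ∃ κ : ℝ, 0 < κ ∧ κ ≤ c / 2 ∧ κ ≤ c / (4 * M) :=
    ⟨min (c / 2) (c / (4 * M)), by positivity, min_le_left _ _, min_le_right _ _⟩
  obtain ⟨K, hK, hbound⟩ := herg θ hθΘ
  have main : ∀ t : ℕ, 1 ≤ t → κ * w ^ t * (w ^ t / 2) ≤ K * ε ^ t := by
    intro t ht
    have hs : 0 < w ^ t := pow_pos hw0 t
    have hs1 : w ^ t ≤ 1 := pow_le_one₀ hw0.le hw1.le
    have hball : Pi {y | N (θ - y) < κ * w ^ t} ≤ ENNReal.ofReal (w ^ t / 2) := by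
      rw [hPi]
      refine (target_ball_le hd hM hπM hc hcN (mul_pos hκ0 hs) ?_ θ
        (measurableSet_lt hNm measurable_const)).trans (ENNReal.ofReal_le_ofReal ?_)
      · nlinarith
      · rw [le_div_iff₀ (by positivity)] at hκ2
        rw [← mul_div_assoc, div_le_iff₀ hc]
        nlinarith
    have h := (le_wassersteinDist_of_atom (ρ := fun x y => N (x - y)) hNm (by positivity) hs.le
      (pow_le_kernelIter_singleton hπmeas hqmeas hw0.le hA t) hball).trans (hbound t ht)
    exact (ENNReal.ofReal_le_ofReal_iff (by positivity)).1 h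
  -- `(w ^ 2 / ε) ^ t` is unbounded in `t`, yet `main` bounds it by `2 * K / κ`
  have hgt : 1 < w ^ 2 / ε := (one_lt_div hε0).2 hwε
  obtain ⟨n, hn⟩ := pow_unbounded_of_one_lt (2 * K / κ) hgt
  have hn' : 2 * K / κ < (w ^ 2 / ε) ^ (n + 1) :=
    hn.trans (pow_lt_pow_right₀ hgt (Nat.lt_succ_self n))
  have hm := main (n + 1) (by omega)
  rw [div_pow, div_lt_div_iff₀ hκ0 (by positivity), ← pow_mul, mul_comm 2 (n + 1), pow_mul] at hn'
  nlinarith
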